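/- Let M be an o-minimal structure. For any first-order formula φ(x;y) in the language of M (where x and y are tuples of variables) and any infinite definable set A ⊆ M^{|x|}, the family {φ(A;b) : b ∈ M^{|y|}} of subsets of A has cardinality at most |A|. -/

import Mathlib

open FirstOrder FirstOrder.Language Set Cardinal Filter Topology

universe u

/-- A subset of a linear order is a finite union of points and open intervals
with endpoints in `M ∪ {-∞, +∞}` (lower endpoints in `WithBot M = M ∪ {-∞}`,
upper endpoints in `WithTop M = M ∪ {+∞}`). -/
def IsFinUnionPointsIntervals {M : Type*} [LinearOrder M] (s : Set M) : Prop :=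
  ∃ (P : Finset M) (I : Finset (WithBot M × WithTop M)),
    s = ↑P ∪ ⋃ p ∈ I, {x : M | p.1 < (x : WithBot M) ∧ (x : WithTop M) < p.2}

/-- `M` is an o-minimal `L`-structure: the language defines the linear order of `M`,
which is dense and without endpoints, and every subset of `M` definable with parameters
is a finite union of points and open intervals with endpoints in `M ∪ {-∞, +∞}`. -/
structure IsOMinimal (L : FirstOrder.Language) (M : Type*) [L.Structure M] [LinearOrder M] :
    Prop where
  denselyOrdered : DenselyOrdered M
  noMinOrder : NoMinOrder M
  noMaxOrder : NoMaxOrder M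
  definable_lt : (∅ : Set M).Definable L {x : Fin 2 → M | x 0 < x 1}
  tame : ∀ s : Set M, (Set.univ : Set M).Definable₁ L s → IsFinUnionPointsIntervals s

/-!
Induct on the number of parameters, splitting off the last one as `(b, c)`. Let `F a b` be the
frontier of `{y | φ(a; b, y)}`, which is finite by o-minimality, and let `E b` be the union of the
`F a b` over `a ∈ A`. If `c ∈ E b`, then `c ∈ F a b` for some `a ∈ A`, and the singleton `{c}` is a
component of `F a b`. If `c ∉ E b`, then no truth value `φ(a; b, y)` with `a ∈ A` changes while `y`
runs through the component of `c` in the complement of `E b`. Either way `φ(A; b, c)` depends only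
on a convex component of a set that is definable over `b` and one element of `A`. This set has
finitely many components, and its `n`-th component from the left is definable uniformly in `b` and
the element of `A`. So for each `n` the parameter `c` can be replaced by an element of `A`, and
`#A * ℵ₀ = #A`.
-/

section Separation

variable {M : Type*} [LinearOrder M] {C D s : Set M}

/-- `C` separates `s` from its complement: every interval with one endpoint in `s` and the other
outside `s` meets `C`. Having a finite separating set is the form in which o-minimality is used. -/
def Separates (C s : Set M) : Prop :=
  ∀ ⦃y⦄, y ∈ s → ∀ ⦃z⦄, z ∉ s → (uIcc y z ∩ C).Nonempty

namespace Separates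

theorem refl (s : Set M) : Separates s s :=
  fun y hy _ _ => ⟨y, left_mem_uIcc, hy⟩

theorem mono (h : Separates C s) (hCD : C ⊆ D) : Separates D s :=
  fun _ hy _ hz => (h hy hz).mono (inter_subset_inter_right _ hCD)

theorem compl (h : Separates C s) : Separates C sᶜ :=
  fun _ hy _ hz => by simpa only [uIcc_comm] using h (notMem_compl_iff.1 hz) hy

theorem union {t : Set M} (hs : Separates C s) (ht : Separates D t) :
    Separates (C ∪ D) (s ∪ t) := by
  rintro y (hy | hy) z hz
  · exact hs.mono subset_union_left hy (notMem_subset subset_union_left hz)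
  · exact ht.mono subset_union_right hy (notMem_subset subset_union_right hz)

theorem biUnion {ι : Type*} {I : Set ι} {C s : ι → Set M} (h : ∀ i, Separates (C i) (s i)) :
    Separates (⋃ i ∈ I, C i) (⋃ i ∈ I, s i) := by
  intro y hy z hz
  obtain ⟨i, hi, hyi⟩ := mem_iUnion₂.1 hy
  exact (h i).mono (subset_biUnion_of_mem hi) hyi (notMem_subset (subset_biUnion_of_mem hi) hz)

theorem mem_iff (h : Separates C s) {y z : M} (hC : Disjoint (uIcc y z) C) : y ∈ s ↔ z ∈ s := by
  have hempty : uIcc y z ∩ C = ∅ := hC.inter_eq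
  refine ⟨fun hy => ?_, fun hz => ?_⟩ <;> by_contra hn
  · exact (h hy hn).ne_empty hempty
  · exact (h hz hn).ne_empty (by rwa [uIcc_comm])

end Separates

theorem separates_interval (a : WithBot M) (b : WithTop M) :
    Separates ((↑) ⁻¹' {a} ∪ (↑) ⁻¹' {b}) {x : M | a < (x : WithBot M) ∧ (x : WithTop M) < b} := by
  rintro y ⟨hay, hyb⟩ z hz
  rcases not_and_or.1 hz with hza | hbz
  · induction a using WithBot.recBotCoe with
    | bot => exact absurd (WithBot.bot_lt_coe z) hza
    | coe a => exact ⟨a, mem_uIcc.2 (.inr ⟨WithBot.coe_le_coe.1 (not_lt.1 hza),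
        (WithBot.coe_lt_coe.1 hay).le⟩), .inl rfl⟩
  · induction b using WithTop.recTopCoe with
    | top => exact absurd (WithTop.coe_lt_top z) hbz
    | coe b => exact ⟨b, mem_uIcc.2 (.inl ⟨(WithTop.coe_lt_coe.1 hyb).le,
        WithTop.coe_le_coe.1 (not_lt.1 hbz)⟩), .inr rfl⟩

theorem IsFinUnionPointsIntervals.exists_finite_separates (hs : IsFinUnionPointsIntervals s) :
    ∃ C : Set M, C.Finite ∧ Separates C s := by
  obtain ⟨P, I, rfl⟩ := hs
  refine ⟨_, P.finite_toSet.union (I.finite_toSet.biUnion fun p _ => ?_),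
    (Separates.refl _).union (Separates.biUnion fun p => separates_interval p.1 p.2)⟩
  exact ((finite_singleton _).preimage WithBot.coe_injective.injOn).union
    ((finite_singleton _).preimage WithTop.coe_injective.injOn)

theorem eq_of_finite_uIcc [DenselyOrdered M] {y z : M} (h : (uIcc y z).Finite) : y = z := by
  by_contra hne
  exact Icc_infinite (inf_lt_sup.2 hne) h

end Separation

section Frontier

variable {M : Type*} [LinearOrder M] [TopologicalSpace M] [OrderTopology M] {C s : Set M}

theorem mem_closure_iff_forall_lt_gt [NoMinOrder M] [NoMaxOrder M] {y : M} :
    y ∈ closure s ↔ ∀ l, l < y → ∀ r, y < r → ∃ t, t ∈ s ∧ l < t ∧ t < r := by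
  rw [mem_closure_iff_nhds_basis (nhds_basis_Ioo y), Prod.forall]
  exact forall_congr' fun l => ⟨fun h hl r hr => h r ⟨hl, hr⟩, fun h r hlr => h hlr.1 r hlr.2⟩

theorem Separates.frontier_subset (h : Separates C s) (hC : IsClosed C) : frontier s ⊆ C := by
  intro y hy
  by_contra hyC
  have hnhds : ordConnectedComponent Cᶜ y ∈ 𝓝 y :=
    ordConnectedComponent_mem_nhds.2 (hC.isOpen_compl.mem_nhds hyC)
  rw [frontier_eq_closure_inter_closure] at hy
  obtain ⟨t, ht, hts⟩ := mem_closure_iff_nhds.1 hy.1 _ hnhds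
  obtain ⟨u, hu, hus⟩ := mem_closure_iff_nhds.1 hy.2 _ hnhds
  obtain ⟨c, hc, hcC⟩ := h hts hus
  exact ordConnectedComponent_subset (OrdConnected.uIcc_subset inferInstance ht hu hc) hcC

theorem exists_mem_uIcc_notMem_uIcc_of_mem_nhds [DenselyOrdered M] {c z : M} (hs : s ∈ 𝓝 c)
    (hcz : c ≠ z) : ∃ t ∈ s, t ∈ uIcc c z ∧ c ∉ uIcc t z := by
  rcases hcz.lt_or_gt with hlt | hgt
  · have : (𝓝[>] c).NeBot := nhdsGT_neBot_of_exists_gt ⟨z, hlt⟩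
    obtain ⟨t, ht, hct, htz⟩ :=
      Filter.nonempty_of_mem (inter_mem (mem_nhdsWithin_of_mem_nhds hs) (Ioo_mem_nhdsGT hlt))
    exact ⟨t, ht, mem_uIcc_of_le hct.le htz.le, notMem_uIcc_of_lt hct hlt⟩
  · have : (𝓝[<] c).NeBot := nhdsLT_neBot_of_exists_lt ⟨z, hgt⟩
    obtain ⟨t, ht, hzt, htc⟩ :=
      Filter.nonempty_of_mem (inter_mem (mem_nhdsWithin_of_mem_nhds hs) (Ioo_mem_nhdsLT hgt))
    exact ⟨t, ht, mem_uIcc_of_ge hzt.le htc.le, notMem_uIcc_of_gt htc hgt⟩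

/-- If `c` is not a frontier point then `s` is constant near `c`, so the endpoint lying on the
other side can be compared with a point next to `c` instead of `c` itself. -/
theorem Separates.of_insert [DenselyOrdered M] {c : M} (h : Separates (insert c C) s)
    (hc : c ∉ frontier s) : Separates C s := by
  wlog hcs : s ∈ 𝓝 c generalizing s
  · have hcs' : sᶜ ∈ 𝓝 c := by
      rw [← mem_interior_iff_mem_nhds] at hcs ⊢
      rw [interior_compl]
      exact fun hcl => hc ⟨hcl, hcs⟩
    simpa only [compl_compl] using (this h.compl (by rwa [frontier_compl]) hcs').compl
  intro y hy z hz
  by_cases hcyz : c ∈ uIcc y z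
  · obtain ⟨t, hts, htcz, hct⟩ := exists_mem_uIcc_notMem_uIcc_of_mem_nhds hcs
      (ne_of_mem_of_not_mem (mem_of_mem_nhds hcs) hz)
    obtain ⟨d, hd, rfl | hdC⟩ := h hts hz
    · exact absurd hd hct
    · exact ⟨d, uIcc_subset_uIcc_right (uIcc_subset_uIcc_right hcyz htcz) hd, hdC⟩
  · obtain ⟨d, hd, rfl | hdC⟩ := h hy hz
    · exact absurd hd hcyz
    · exact ⟨d, hd, hdC⟩

theorem Separates.frontier_of_finite [DenselyOrdered M] (h : Separates C s) (hC : C.Finite) :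
    Separates (frontier s) s := by
  suffices ∀ D : Set M, D.Finite → Separates (D ∪ frontier s) s → Separates (frontier s) s from
    this C hC (h.mono subset_union_left)
  intro D hD
  induction D, hD using Set.Finite.induction_on with
  | empty => simp
  | @insert c D _ _ ih =>
    intro hcD
    rw [insert_union] at hcD
    by_cases hc : c ∈ frontier s
    · exact ih (hcD.mono (insert_subset (.inr hc) subset_rfl))
    · exact ih (hcD.of_insert hc)

end Frontier

section Components

variable {M : Type*} [LinearOrder M] {C S : Set M}

/-- The points of `S` with at least `n` convex components of `S` strictly to the left of their own
component. The recursion makes this first-order definable uniformly in `S`. -/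
def laterComponents (S : Set M) : ℕ → Set M
  | 0 => S
  | n + 1 => {y | y ∈ S ∧ ∃ t, t ∉ S ∧ t < y ∧ ∃ z, z ∈ laterComponents S n ∧ z < t}

/-- The convex component of `S` with exactly `n` components to its left, counting from `n = 0`;
empty if there is none. -/
def nthComponent (S : Set M) (n : ℕ) : Set M :=
  laterComponents S n \ laterComponents S (n + 1)

theorem laterComponents_subset (S : Set M) : ∀ n, laterComponents S n ⊆ S
  | 0 => subset_rfl
  | _ + 1 => fun _ hy => hy.1

theorem uIcc_subset_of_mem_nthComponent {n : ℕ} {y z : M} (hy : y ∈ nthComponent S n)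
    (hz : z ∈ nthComponent S n) : uIcc y z ⊆ S := by
  wlog hyz : y ≤ z generalizing y z
  · simpa only [uIcc_comm] using this hz hy (le_of_not_ge hyz)
  rw [uIcc_of_le hyz]
  rintro t ⟨hyt, htz⟩
  by_contra ht
  have hyS : y ∈ S := laterComponents_subset S n hy.1
  have hzS : z ∈ S := laterComponents_subset S n hz.1
  exact hz.2 ⟨hzS, t, ht, htz.lt_of_ne (ne_of_mem_of_not_mem hzS ht).symm, y, hy.1,
    hyt.lt_of_ne (ne_of_mem_of_not_mem hyS ht)⟩

theorem Separates.le_ncard_of_mem_laterComponents (h : Separates C S) (hC : C.Finite) {n : ℕ}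
    {y : M} (hy : y ∈ laterComponents S n) : n ≤ (C ∩ Iio y).ncard := by
  induction n generalizing y with
  | zero => exact Nat.zero_le _
  | succ n ih =>
    obtain ⟨-, t, htS, hty, z, hz, hzt⟩ := hy
    obtain ⟨c, hc, hcC⟩ := h (laterComponents_subset S n hz) htS
    rw [uIcc_of_le hzt.le] at hc
    have hssub : C ∩ Iio z ⊂ C ∩ Iio y :=
      (ssubset_iff_of_subset (inter_subset_inter_right _ (Iio_subset_Iio (hzt.trans hty).le))).2
        ⟨c, ⟨hcC, hc.2.trans_lt hty⟩, fun hcz => hcz.2.not_ge hc.1⟩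
    exact (ih hz).trans_lt (ncard_lt_ncard hssub (hC.inter_of_left _))

theorem Separates.exists_mem_nthComponent (h : Separates C S) (hC : C.Finite) {y : M}
    (hy : y ∈ S) : ∃ n, y ∈ nthComponent S n := by
  by_contra! hnone
  have hall : ∀ n, y ∈ laterComponents S n := by
    intro n
    induction n with
    | zero => exact hy
    | succ n ih => exact not_not.1 fun hn => hnone n ⟨ih, hn⟩
  exact (h.le_ncard_of_mem_laterComponents hC (hall ((C ∩ Iio y).ncard + 1))).not_gt
    (Nat.lt_succ_self _)

end Components

section DefinablePred

variable {L : FirstOrder.Language} {M : Type*} [L.Structure M] {γ δ : Type*}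
  {p q : (γ → M) → Prop} {S : (γ → M) → Set M}

variable (L) in
/-- Definability with parameters from `M`, for predicates on tuples. -/
def DefinablePred (p : (γ → M) → Prop) : Prop :=
  (univ : Set M).Definable L {v | p v}

namespace DefinablePred

theorem and (hp : DefinablePred L p) (hq : DefinablePred L q) :
    DefinablePred L fun v => p v ∧ q v :=
  hp.inter hq

theorem not (hp : DefinablePred L p) : DefinablePred L fun v => ¬ p v :=
  hp.compl

theorem imp (hp : DefinablePred L p) (hq : DefinablePred L q) :
    DefinablePred L fun v => p v → q v :=
  hp.himp hq

theorem comp (hp : DefinablePred L p) (f : γ → δ) : DefinablePred L fun w : δ → M => p (w ∘ f) :=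
  hp.preimage_comp f

theorem exists_tuple [Finite δ] {p : (γ → M) → (δ → M) → Prop}
    (hp : DefinablePred L fun w : γ ⊕ δ → M => p (w ∘ Sum.inl) (w ∘ Sum.inr)) :
    DefinablePred L fun v => ∃ x, p v x :=
  hp.exists_of_finite

theorem exists_elem {p : (γ → M) → M → Prop}
    (hp : DefinablePred L fun w : Option γ → M => p (w ∘ some) (w none)) :
    DefinablePred L fun v => ∃ x, p v x := by
  have htuple : DefinablePred L fun v => ∃ x : Unit → M, p v (x ()) :=
    exists_tuple (hp.comp fun o => o.elim (Sum.inr ()) Sum.inl)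
  convert htuple using 2 with v
  exact (Equiv.funUnique Unit M).symm.exists_congr_left

theorem forall_elem {p : (γ → M) → M → Prop}
    (hp : DefinablePred L fun w : Option γ → M => p (w ∘ some) (w none)) :
    DefinablePred L fun v => ∀ x, p v x := by
  simpa only [not_exists, not_not] using (exists_elem (p := fun v x => ¬ p v x) hp.not).not

end DefinablePred

variable (L) in
/-- A definable family of subsets of `M` indexed by tuples. In the tuple `w` the coordinate `none`
holds the candidate element and the coordinates `some i` hold the index. -/
def DefinableFamily (S : (γ → M) → Set M) : Prop :=
  DefinablePred L fun w : Option γ → M => w none ∈ S (w ∘ some)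

namespace DefinableFamily

theorem mem (hS : DefinableFamily L S) (f : γ → δ) (i : δ) :
    DefinablePred L fun w : δ → M => w i ∈ S (w ∘ f) :=
  hS.comp fun o => o.elim i f

theorem compl (hS : DefinableFamily L S) : DefinableFamily L fun v => (S v)ᶜ :=
  hS.not

theorem definable₁ [Finite γ] (hS : DefinableFamily L S) (v : γ → M) :
    (univ : Set M).Definable₁ L (S v) := by
  have hmap : (univ : Set M).DefinableMap L
      fun (y : Fin 1 → M) (o : Option γ) => o.elim (y 0) v := by
    rintro (_ | i)
    · exact DefinableFun.proj L
    · exact L.definableFun_const _ (mem_univ (v i))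
  exact Definable.preimage_map hmap hS

section Order

variable [LinearOrder M]

theorem laterComponents (hlt : DefinablePred L fun x : Fin 2 → M => x 0 < x 1)
    (hS : DefinableFamily L S) (n : ℕ) : DefinableFamily L fun v => laterComponents (S v) n := by
  induction n with
  | zero => exact hS
  | succ n ih =>
    refine .and hS (.exists_elem (.and (.not ?_) (.and ?_ (.exists_elem (.and ?_ ?_)))))
    · exact hS.mem (some ∘ some) none
    · exact hlt.comp ![none, some none]
    · exact ih.mem (some ∘ some ∘ some) none
    · exact hlt.comp ![none, some none]

theorem nthComponent (hlt : DefinablePred L fun x : Fin 2 → M => x 0 < x 1)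
    (hS : DefinableFamily L S) (n : ℕ) : DefinableFamily L fun v => nthComponent (S v) n :=
  .and (hS.laterComponents hlt n) (.not (hS.laterComponents hlt (n + 1)))

theorem closure [TopologicalSpace M] [OrderTopology M] [NoMinOrder M] [NoMaxOrder M]
    (hlt : DefinablePred L fun x : Fin 2 → M => x 0 < x 1) (hS : DefinableFamily L S) :
    DefinableFamily L fun v => closure (S v) := by
  simp only [DefinableFamily, mem_closure_iff_forall_lt_gt]
  refine .forall_elem (.imp ?_ (.forall_elem (.imp ?_ (.exists_elem (.and ?_ (.and ?_ ?_))))))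
  · exact hlt.comp ![none, some none]
  · exact hlt.comp ![some (some none), none]
  · exact hS.mem (some ∘ some ∘ some ∘ some) none
  · exact hlt.comp ![some (some none), none]
  · exact hlt.comp ![none, some none]

theorem frontier [TopologicalSpace M] [OrderTopology M] [NoMinOrder M] [NoMaxOrder M]
    (hlt : DefinablePred L fun x : Fin 2 → M => x 0 < x 1) (hS : DefinableFamily L S) :
    DefinableFamily L fun v => frontier (S v) := by
  simp only [frontier_eq_closure_inter_closure]
  exact .and (hS.closure hlt) (hS.compl.closure hlt)

end Order

end DefinableFamily

end DefinablePred

namespace IsOMinimal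

variable {L : FirstOrder.Language} {M : Type*} [L.Structure M] [LinearOrder M] {s : Set M}

theorem definablePred_lt (hM : IsOMinimal L M) :
    DefinablePred L fun x : Fin 2 → M => x 0 < x 1 :=
  hM.definable_lt.mono (empty_subset _)

theorem exists_finite_separates (hM : IsOMinimal L M) (hs : (univ : Set M).Definable₁ L s) :
    ∃ C : Set M, C.Finite ∧ Separates C s :=
  (hM.tame s hs).exists_finite_separates

variable [TopologicalSpace M] [OrderTopology M]

theorem finite_frontier (hM : IsOMinimal L M) (hs : (univ : Set M).Definable₁ L s) :
    (frontier s).Finite :=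
  let ⟨_, hC, hsep⟩ := hM.exists_finite_separates hs
  hC.subset (hsep.frontier_subset hC.isClosed)

theorem separates_frontier (hM : IsOMinimal L M) (hs : (univ : Set M).Definable₁ L s) :
    Separates (frontier s) s :=
  have := hM.denselyOrdered
  let ⟨_, hC, hsep⟩ := hM.exists_finite_separates hs
  hsep.frontier_of_finite hC

end IsOMinimal

section Counting

universe w

theorem mk_iUnion_le_of_countable {ι : Type*} {X : Type u} [Countable ι] {f : ι → Set X}
    {κ : Cardinal.{u}} (hκ : ℵ₀ ≤ κ) (hf : ∀ i, #(f i) ≤ κ) : #(⋃ i, f i) ≤ κ := by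
  rw [← Cardinal.lift_le]
  calc lift #(⋃ i, f i) ≤ lift #ι * ⨆ i, lift #(f i) := mk_iUnion_le_lift f
    _ ≤ lift κ * lift κ := by
      gcongr
      · exact (lift_le_aleph0.2 mk_le_aleph0).trans (aleph0_le_lift.2 hκ)
      · exact ciSup_le' fun i => lift_le.2 (hf i)
    _ = lift κ := mul_eq_self (aleph0_le_lift.2 hκ)

variable {L : FirstOrder.Language} {M : Type u} [L.Structure M] {α β : Type w}
  {A : Set (α → M)}

variable (L M) in
/-- Definable relations with parameter tuples indexed by `β` have at most `#A` traces on each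
infinite definable set `A`. This is the induction hypothesis; it quantifies over all variable
tuples `α` because the step from `β` to `Option β` applies it to `α ⊕ α`. -/
def TraceBound (β : Type w) : Prop :=
  ∀ {α : Type w} [Finite α] {A : Set (α → M)}, (univ : Set M).Definable L A → A.Infinite →
    ∀ {p : (α → M) → (β → M) → Prop},
      DefinablePred L (fun w : α ⊕ β → M => p (w ∘ Sum.inl) (w ∘ Sum.inr)) →
      #(range fun b => {a ∈ A | p a b}) ≤ #A

theorem TraceBound.of_equiv {β' : Type w} (e : β ≃ β') (h : TraceBound L M β) :
    TraceBound L M β' := by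
  intro α _ A hA hinf p hp
  have hrange : (range fun b => {a ∈ A | p a b}) =
      range fun b : β → M => {a ∈ A | p a (b ∘ e.symm)} :=
    ((e.arrowCongr (Equiv.refl M)).surjective.range_comp fun b => {a ∈ A | p a b}).symm
  rw [hrange]
  exact h hA hinf (hp.comp (Sum.map id e.symm))

theorem TraceBound.of_isEmpty [IsEmpty β] : TraceBound L M β := by
  intro α _ A _ hinf p _
  calc _ ≤ #(β → M) := Cardinal.mk_range_le
    _ ≤ ℵ₀ := by simp
    _ ≤ #A := Cardinal.infinite_iff.1 hinf.to_subtype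

theorem mk_sumArrow_prod (A : Set (α → M)) (B : Set (β → M)) :
    #{x : α ⊕ β → M | x ∘ Sum.inl ∈ A ∧ x ∘ Sum.inr ∈ B} = #A * #B := by
  rw [Cardinal.mul_def]
  refine Cardinal.mk_congr (((Equiv.sumArrowEquivProdArrow α β M).subtypeEquiv fun x => ?_).trans
    (Equiv.Set.prod A B))
  rfl

/-- The extra parameter `x₀` becomes a variable of a relation on `A × A`, which has the cardinality
of `A`. -/
theorem TraceBound.mk_range_prod_le [Finite α] (h : TraceBound L M β)
    (hA : (univ : Set M).Definable L A) (hinf : A.Infinite)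
    {q : (α → M) → (α → M) → (β → M) → Prop}
    (hq : DefinablePred L fun w : (α ⊕ α) ⊕ β → M =>
      q (w ∘ Sum.inl ∘ Sum.inl) (w ∘ Sum.inl ∘ Sum.inr) (w ∘ Sum.inr)) :
    #(range fun v : A × (β → M) => {a ∈ A | q v.1 a v.2}) ≤ #A := by
  have hκ : ℵ₀ ≤ #A := Cardinal.infinite_iff.1 hinf.to_subtype
  let B : Set (α ⊕ α → M) := {x | x ∘ Sum.inl ∈ A ∧ x ∘ Sum.inr ∈ A}
  have hBA : #B = #A := (mk_sumArrow_prod A A).trans (Cardinal.mul_eq_self hκ)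
  have hB : (univ : Set M).Definable L B :=
    (hA.preimage_comp Sum.inl).inter (hA.preimage_comp Sum.inr)
  have hBinf : B.Infinite := by
    rw [← infinite_coe_iff, Cardinal.infinite_iff, hBA]; exact hκ
  let p : (α ⊕ α → M) → (β → M) → Prop := fun x b => q (x ∘ Sum.inl) (x ∘ Sum.inr) b
  let T := range fun b => {x ∈ B | p x b}
  have hsub : (range fun v : A × (β → M) => {a ∈ A | q v.1 a v.2}) ⊆
      image2 (fun x₀ s => {a | Sum.elim x₀ a ∈ s}) A T := by
    rintro _ ⟨⟨⟨x₀, hx₀⟩, b⟩, rfl⟩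
    refine ⟨x₀, hx₀, _, ⟨b, rfl⟩, ?_⟩
    ext a
    exact and_congr_left' (and_iff_right hx₀)
  calc #(range fun v : A × (β → M) => {a ∈ A | q v.1 a v.2})
      ≤ #A * #T := (Cardinal.mk_le_mk_of_subset hsub).trans Cardinal.mk_image2_le
    _ ≤ #A * #B := by gcongr; exact h hB hBinf hq
    _ = #A := by rw [hBA, Cardinal.mul_eq_self hκ]

variable [LinearOrder M]

theorem TraceBound.mk_traces_le_of_forall_component_const [Finite α] [Finite β]
    (hM : IsOMinimal L M) (h : TraceBound L M β)
    (hA : (univ : Set M).Definable L A) (hinf : A.Infinite) {P S : (α → M) → (β → M) → Set M}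
    (hP : DefinableFamily L fun v : α ⊕ β → M => P (v ∘ Sum.inl) (v ∘ Sum.inr))
    (hS : DefinableFamily L fun v : α ⊕ β → M => S (v ∘ Sum.inl) (v ∘ Sum.inr))
    (hconst : ∀ x₀ ∈ A, ∀ b y z, uIcc y z ⊆ S x₀ b → ∀ a ∈ A, (y ∈ P a b ↔ z ∈ P a b)) :
    #{s | ∃ x₀ ∈ A, ∃ b, ∃ c ∈ S x₀ b, s = {a ∈ A | c ∈ P a b}} ≤ #A := by
  have hκ : ℵ₀ ≤ #A := Cardinal.infinite_iff.1 hinf.to_subtype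
  let q (n : ℕ) (x₀ a : α → M) (b : β → M) : Prop := ∃ y, y ∈ nthComponent (S x₀ b) n ∧ y ∈ P a b
  have hq (n : ℕ) : DefinablePred L fun w : (α ⊕ α) ⊕ β → M =>
      q n (w ∘ Sum.inl ∘ Sum.inl) (w ∘ Sum.inl ∘ Sum.inr) (w ∘ Sum.inr) :=
    .exists_elem (.and
      ((hS.nthComponent hM.definablePred_lt n).mem
        (Sum.elim (some ∘ Sum.inl ∘ Sum.inl) (some ∘ Sum.inr)) none)
      (hP.mem (Sum.elim (some ∘ Sum.inl ∘ Sum.inr) (some ∘ Sum.inr)) none))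
  have hcover : {s | ∃ x₀ ∈ A, ∃ b, ∃ c ∈ S x₀ b, s = {a ∈ A | c ∈ P a b}} ⊆
      ⋃ n, range fun v : A × (β → M) => {a ∈ A | q n v.1 a v.2} := by
    rintro _ ⟨x₀, hx₀, b, c, hc, rfl⟩
    obtain ⟨C, hC, hsep⟩ := hM.exists_finite_separates (hS.definable₁ (Sum.elim x₀ b))
    obtain ⟨n, hn⟩ := hsep.exists_mem_nthComponent hC hc
    refine mem_iUnion.2 ⟨n, (⟨x₀, hx₀⟩, b), ?_⟩
    ext a
    refine and_congr_right fun ha => ⟨fun ⟨y, hy, hya⟩ => ?_, fun hca => ⟨c, hn, hca⟩⟩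
    exact (hconst x₀ hx₀ b y c (uIcc_subset_of_mem_nthComponent hy hn) a ha).1 hya
  exact (Cardinal.mk_le_mk_of_subset hcover).trans
    (mk_iUnion_le_of_countable hκ fun n => h.mk_range_prod_le hA hinf (hq n))

theorem TraceBound.mk_range_elem_le [Finite α] [Finite β] (hM : IsOMinimal L M)
    (h : TraceBound L M β) (hA : (univ : Set M).Definable L A) (hinf : A.Infinite)
    {P : (α → M) → (β → M) → Set M}
    (hP : DefinableFamily L fun v : α ⊕ β → M => P (v ∘ Sum.inl) (v ∘ Sum.inr)) :
    #(range fun v : (β → M) × M => {a ∈ A | v.2 ∈ P a v.1}) ≤ #A := by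
  have := hM.denselyOrdered
  have := hM.noMinOrder
  have := hM.noMaxOrder
  let : TopologicalSpace M := Preorder.topology M
  have : OrderTopology M := ⟨rfl⟩
  let F (x : α → M) (b : β → M) : Set M := frontier (P x b)
  let E (b : β → M) : Set M := {y | ∃ x, x ∈ A ∧ y ∈ F x b}
  have hF : DefinableFamily L fun v : α ⊕ β → M => F (v ∘ Sum.inl) (v ∘ Sum.inr) :=
    hP.frontier hM.definablePred_lt
  have hE : DefinableFamily L fun v : α ⊕ β → M => (E (v ∘ Sum.inr))ᶜ :=
    .not (.exists_tuple (.and (DefinablePred.comp hA Sum.inr)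
      (hF.mem (Sum.elim Sum.inr (Sum.inl ∘ some ∘ Sum.inr)) (Sum.inl none))))
  have hP₁ (x b) : (univ : Set M).Definable₁ L (P x b) := hP.definable₁ (Sum.elim x b)
  have hFconst : ∀ x₀ ∈ A, ∀ b y z, uIcc y z ⊆ F x₀ b → ∀ a ∈ A, (y ∈ P a b ↔ z ∈ P a b) := by
    intro x₀ _ b y z hyz a _
    rw [eq_of_finite_uIcc ((hM.finite_frontier (hP₁ x₀ b)).subset hyz)]
  have hEconst : ∀ x₀ ∈ A, ∀ b y z, uIcc y z ⊆ (E b)ᶜ → ∀ a ∈ A, (y ∈ P a b ↔ z ∈ P a b) :=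
    fun _ _ b y z hyz a ha => (hM.separates_frontier (hP₁ a b)).mem_iff
      (disjoint_left.2 fun t ht htF => hyz ht ⟨a, ha, htF⟩)
  have hcover : (range fun v : (β → M) × M => {a ∈ A | v.2 ∈ P a v.1}) ⊆
      {s | ∃ x₀ ∈ A, ∃ b, ∃ c ∈ F x₀ b, s = {a ∈ A | c ∈ P a b}} ∪
      {s | ∃ x₀ ∈ A, ∃ b, ∃ c ∈ (E b)ᶜ, s = {a ∈ A | c ∈ P a b}} := by
    rintro _ ⟨⟨b, c⟩, rfl⟩
    by_cases hc : c ∈ E b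
    · obtain ⟨x₀, hx₀, hcF⟩ := hc
      exact .inl ⟨x₀, hx₀, b, c, hcF, rfl⟩
    · obtain ⟨x₀, hx₀⟩ := hinf.nonempty
      exact .inr ⟨x₀, hx₀, b, c, hc, rfl⟩
  exact (Cardinal.mk_le_mk_of_subset hcover).trans <| (Cardinal.mk_union_le _ _).trans <|
    Cardinal.add_le_of_le (Cardinal.infinite_iff.1 hinf.to_subtype)
      (h.mk_traces_le_of_forall_component_const hM hA hinf hP hF hFconst)
      (h.mk_traces_le_of_forall_component_const hM hA hinf hP hE hEconst)

theorem TraceBound.option [Finite β] (hM : IsOMinimal L M) (h : TraceBound L M β) :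
    TraceBound L M (Option β) := by
  intro α _ A hA hinf p hp
  let P (x : α → M) (b : β → M) : Set M := {y | p x fun o => o.elim y b}
  have helim (w : Option (α ⊕ β) → M) :
      (fun o => o.elim (w none) (w ∘ some ∘ Sum.inr)) =
        w ∘ fun o : Option β => o.elim none (some ∘ Sum.inr) :=
    funext fun o => by cases o <;> rfl
  have hP : DefinableFamily L fun v : α ⊕ β → M => P (v ∘ Sum.inl) (v ∘ Sum.inr) := by
    simp only [DefinableFamily, P, mem_ofPred_eq, Function.comp_assoc, helim]
    exact hp.comp (Sum.elim (some ∘ Sum.inl) fun o => o.elim none (some ∘ Sum.inr))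
  refine (Cardinal.mk_le_mk_of_subset ?_).trans (h.mk_range_elem_le hM hA hinf hP)
  rintro _ ⟨b, rfl⟩
  refine ⟨(b ∘ some, b none), ?_⟩
  simp only [P, mem_ofPred_eq, Option.elim_none_some]

theorem IsOMinimal.traceBound (hM : IsOMinimal L M) (β : Type w) [Finite β] : TraceBound L M β :=
  Finite.induction_empty_option (P := fun β => TraceBound L M β) (fun e h => h.of_equiv e)
    TraceBound.of_isEmpty (fun h => h.option hM) β

end Counting

/-- Main result: in an o-minimal structure `M`, for any formula `φ(x;y)` and any infinite
definable set `A ⊆ M^|x|`, the family `{φ(A;b) : b ∈ M^|y|}` has cardinality at most `|A|`. -/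
theorem card_definable_family_le {L : FirstOrder.Language.{u, u}} {M : Type u} [L.Structure M]
    [LinearOrder M] (hM : IsOMinimal L M) {m k : ℕ} (φ : L.Formula (Fin m ⊕ Fin k))
    (A : Set (Fin m → M)) (hAdef : (Set.univ : Set M).Definable L A) (hAinf : A.Infinite) :
    #{s : Set (Fin m → M) | ∃ b : Fin k → M,
        s = {a ∈ A | φ.Realize (Sum.elim a b)}} ≤ #A := by
  have hφ : DefinablePred L fun w : Fin m ⊕ Fin k → M =>
      φ.Realize (Sum.elim (w ∘ Sum.inl) (w ∘ Sum.inr)) := by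
    simp only [Sum.elim_comp_inl_inr]
    exact (empty_definable_iff.2 ⟨φ, rfl⟩).mono (empty_subset _)
  simpa only [range, eq_comm] using hM.traceBound (Fin k) hAdef hAinf hφ
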